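/- arXiv:1505.02332 — 4 statements merged into one kernel-verified Lean document; each statement's English description precedes it below -/
import Mathlib

section
/- For every polynomial w in the Adini shape function space P_A and every index i with 1 ≤ i ≤ d, the partial derivative ∂w/∂x_i belongs to the subspace Q₁ + span{(x_j − c_j)²·q̂ : 1 ≤ j ≤ d, q̂ ∈ Q₁^i} of ℝ[x_1,…,x_d]. -/
open MvPolynomial MeasureTheory

/-- `Q₁`: the span of the monomials `x^α` with `α i ≤ 1` for every `i`. -/
noncomputable def Q1 (d : ℕ) : Submodule ℝ (MvPolynomial (Fin d) ℝ) :=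
  Submodule.span ℝ {p | ∃ α : Fin d →₀ ℕ, (∀ i, α i ≤ 1) ∧ p = monomial α (1 : ℝ)}

/-- The Adini shape function space `P_A = Q₁ + span{x_i² q : 1 ≤ i ≤ d, q ∈ Q₁}`. -/
noncomputable def PA (d : ℕ) : Submodule ℝ (MvPolynomial (Fin d) ℝ) :=
  Q1 d ⊔ Submodule.span ℝ {p | ∃ i : Fin d, ∃ q ∈ Q1 d, p = X i ^ 2 * q}

/-- `Q₁^i`: elements of `Q₁` of degree 0 in `x_i`. -/
noncomputable def Q1i (d : ℕ) (i : Fin d) : Submodule ℝ (MvPolynomial (Fin d) ℝ) :=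
  Submodule.span ℝ
    {p | ∃ α : Fin d →₀ ℕ, (∀ j, α j ≤ 1) ∧ α i = 0 ∧ p = monomial α (1 : ℝ)}

/-- `S^i = span{((x_j − c_j)² − h_j²) q̂ : 1 ≤ j ≤ d, q̂ ∈ Q₁^i}`. -/
noncomputable def Si (d : ℕ) (c h : Fin d → ℝ) (i : Fin d) :
    Submodule ℝ (MvPolynomial (Fin d) ℝ) :=
  Submodule.span ℝ
    {p | ∃ j : Fin d, ∃ q ∈ Q1i d i, p = ((X j - C (c j)) ^ 2 - C (h j ^ 2)) * q}

/-- The vertices of the `d`-rectangle with centre `c` and half-lengths `h`. -/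
def IsVertex {d : ℕ} (c h : Fin d → ℝ) (a : Fin d → ℝ) : Prop :=
  ∀ i, a i = c i - h i ∨ a i = c i + h i

/-- The `d`-rectangle `K = ∏_i [c_i − h_i, c_i + h_i]`. -/
def box {d : ℕ} (c h : Fin d → ℝ) : Set (Fin d → ℝ) :=
  Set.univ.pi fun i => Set.Icc (c i - h i) (c i + h i)

/-- The iterated partial derivative `∂^α`. -/
noncomputable def pderivPow {d : ℕ} (α : Fin d → ℕ) :
    MvPolynomial (Fin d) ℝ →ₗ[ℝ] MvPolynomial (Fin d) ℝ :=
  (List.ofFn fun i : Fin d =>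
    ((pderiv (R := ℝ) i).toLinearMap :
        Module.End ℝ (MvPolynomial (Fin d) ℝ)) ^ α i).prod

/-!
The proof rests on the splitting `q = a + x_k b` of a polynomial of degree at most one in each
variable, with `a` and `b` free of `x_k`: it gives
`x_k q = x_k a + (x_k - c_k)² b + 2 c_k x_k b - c_k² b`, so multiplication by `x_k` maps `Q₁` into
the Adini space centred at `c`. Two things follow: the Adini space does not depend on its centre,
and in `∂_i ((x_k - c_k)² q) = 2 (x_k - c_k) (∂_i x_k) q + (x_k - c_k)² ∂_i q` both summands stay
in the space, the second one with `∂_i q` free of `x_i`.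
-/

section Multiaffine

variable {σ R : Type*} [CommSemiring R] {s t : Set σ} {k : σ} {α : σ →₀ ℕ} {p : MvPolynomial σ R}

/-- The exponents of the squarefree monomials in the variables indexed by `s`. -/
def squarefreeExponents (s : Set σ) : Set (σ →₀ ℕ) :=
  {α | (∀ j, α j ≤ 1) ∧ ∀ j ∉ s, α j = 0}

variable (R) in
/-- The polynomials in the variables indexed by `s` that have degree at most one in each of them.
This is `Q₁` when `s` is everything and `Q₁^i` when `s` is the complement of `{i}`. -/
noncomputable def multiaffine (s : Set σ) : Submodule R (MvPolynomial σ R) :=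
  restrictSupport R (squarefreeExponents s)

lemma squarefreeExponents_mono (hst : s ⊆ t) : squarefreeExponents s ⊆ squarefreeExponents t :=
  fun _ hα => ⟨hα.1, fun j hj => hα.2 j (mt (@hst j) hj)⟩

lemma mem_squarefreeExponents_sdiff_singleton (hα : α ∈ squarefreeExponents s) (hk : α k = 0) :
    α ∈ squarefreeExponents (s \ {k}) := by
  refine ⟨hα.1, fun j hj => ?_⟩
  by_cases hjs : j ∈ s
  · obtain rfl : j = k := by_contra fun hjk => hj ⟨hjs, hjk⟩
    exact hk
  · exact hα.2 j hjs

lemma mem_squarefreeExponents_sdiff_singleton_of_add_single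
    (hα : α + Finsupp.single k 1 ∈ squarefreeExponents s) :
    α ∈ squarefreeExponents (s \ {k}) := by
  have hle (j : σ) : α j ≤ (α + Finsupp.single k 1 : σ →₀ ℕ) j := by simp
  have hk : α k = 0 := by simpa using hα.1 k
  exact mem_squarefreeExponents_sdiff_singleton
    ⟨fun j => (hle j).trans (hα.1 j), fun j hj => Nat.eq_zero_of_le_zero (hα.2 j hj ▸ hle j)⟩ hk

lemma single_add_mem_squarefreeExponents_insert (hk : k ∉ s) (hα : α ∈ squarefreeExponents s) :
    Finsupp.single k 1 + α ∈ squarefreeExponents (insert k s) := by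
  refine ⟨fun j => ?_, fun j hj => ?_⟩
  · obtain rfl | hjk := eq_or_ne j k
    · simp [hα.2 j hk]
    · simpa [Finsupp.single_apply, hjk.symm] using hα.1 j
  · obtain ⟨hjk, hjs⟩ := not_or.mp hj
    simp [Ne.symm hjk, hα.2 j hjs]

lemma mem_multiaffine_iff :
    p ∈ multiaffine R s ↔ ∀ α, coeff α p ≠ 0 → α ∈ squarefreeExponents s := by
  simp only [multiaffine, mem_restrictSupport_iff, Set.subset_def, Finset.mem_coe, mem_support_iff]

lemma multiaffine_mono (hst : s ⊆ t) : multiaffine R s ≤ multiaffine R t :=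
  restrictSupport_mono R (squarefreeExponents_mono hst)

lemma X_mul_mem_multiaffine_insert (hk : k ∉ s) (hp : p ∈ multiaffine R s) :
    X k * p ∈ multiaffine R (insert k s) := by
  rw [mem_multiaffine_iff] at hp ⊢
  intro α hα
  obtain ⟨β, hβ, rfl⟩ : ∃ β ∈ p.support, Finsupp.single k 1 + β = α := by
    rwa [← mem_support_iff, support_X_mul, Finset.mem_map] at hα
  exact single_add_mem_squarefreeExponents_insert hk (hp β (mem_support_iff.mp hβ))

lemma modMonomial_single_mem_multiaffine_sdiff_singleton (k : σ) (hp : p ∈ multiaffine R s) :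
    p.modMonomial (Finsupp.single k 1) ∈ multiaffine R (s \ {k}) := by
  rw [mem_multiaffine_iff] at hp ⊢
  intro α hα
  have hle : ¬ Finsupp.single k 1 ≤ α := fun hle => hα (coeff_modMonomial_of_le p hle)
  rw [coeff_modMonomial_of_not_le p hle] at hα
  have hk : α k = 0 := by simpa [Finsupp.single_le_iff] using hle
  exact mem_squarefreeExponents_sdiff_singleton (hp α hα) hk

lemma divMonomial_single_mem_multiaffine_sdiff_singleton (k : σ) (hp : p ∈ multiaffine R s) :
    p.divMonomial (Finsupp.single k 1) ∈ multiaffine R (s \ {k}) := by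
  rw [mem_multiaffine_iff] at hp ⊢
  intro α hα
  rw [coeff_divMonomial, add_comm] at hα
  exact mem_squarefreeExponents_sdiff_singleton_of_add_single (hp _ hα)

lemma exists_eq_add_X_mul_of_mem_multiaffine (k : σ) (hp : p ∈ multiaffine R s) :
    ∃ a ∈ multiaffine R (s \ {k}), ∃ b ∈ multiaffine R (s \ {k}), p = a + X k * b :=
  ⟨_, modMonomial_single_mem_multiaffine_sdiff_singleton k hp,
    _, divMonomial_single_mem_multiaffine_sdiff_singleton k hp,
    (modMonomial_add_divMonomial_single p k).symm⟩

lemma pderiv_mem_multiaffine_sdiff_singleton (k : σ) (hp : p ∈ multiaffine R s) :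
    pderiv k p ∈ multiaffine R (s \ {k}) := by
  rw [mem_multiaffine_iff] at hp ⊢
  intro α hα
  rw [coeff_pderiv] at hα
  exact mem_squarefreeExponents_sdiff_singleton_of_add_single (hp _ (left_ne_zero_of_mul hα))

end Multiaffine

section AdiniSpace

variable {σ R : Type*} [CommRing R] {s t : Set σ} {q w : MvPolynomial σ R}

/-- The Adini space centred at `c` with coefficients in the variables indexed by `s`:
`Q₁ + span {(x_j - c_j)² q}` with `q` multiaffine in the variables of `s`, while `j` ranges over
all indices. It is `P_A` when `c = 0` and `s` is everything, and the target space of `∂_i` when `s`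
is the complement of `{i}`. -/
noncomputable def adiniSpace (c : σ → R) (s : Set σ) : Submodule R (MvPolynomial σ R) :=
  multiaffine R Set.univ ⊔
    Submodule.span R {p | ∃ j, ∃ q ∈ multiaffine R s, p = (X j - C (c j)) ^ 2 * q}

lemma mem_adiniSpace_of_mem_multiaffine (c : σ → R) (hq : q ∈ multiaffine R t) :
    q ∈ adiniSpace c s :=
  Submodule.mem_sup_left (multiaffine_mono t.subset_univ hq)

lemma sq_mul_mem_adiniSpace (c : σ → R) (k : σ) (hq : q ∈ multiaffine R s) :
    (X k - C (c k)) ^ 2 * q ∈ adiniSpace c s :=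
  Submodule.mem_sup_right (Submodule.subset_span ⟨k, q, hq, rfl⟩)

lemma adiniSpace_mono (c : σ → R) (hst : s ⊆ t) : adiniSpace c s ≤ adiniSpace c t :=
  sup_le_sup_left (Submodule.span_mono (by
    rintro _ ⟨j, q, hq, rfl⟩
    exact ⟨j, q, multiaffine_mono hst hq, rfl⟩)) _

lemma C_mul_mem_adiniSpace {c : σ → R} (r : R) (hw : w ∈ adiniSpace c s) :
    C r * w ∈ adiniSpace c s := by
  rw [← smul_eq_C_mul]
  exact Submodule.smul_mem _ r hw

lemma X_mul_mem_adiniSpace_sdiff_singleton (c : σ → R) (k : σ) (hq : q ∈ multiaffine R s) :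
    X k * q ∈ adiniSpace c (s \ {k}) := by
  obtain ⟨a, ha, b, hb, rfl⟩ := exists_eq_add_X_mul_of_mem_multiaffine k hq
  have X_mul_mem {p : MvPolynomial σ R} (hp : p ∈ multiaffine R (s \ {k})) :
      X k * p ∈ adiniSpace c (s \ {k}) :=
    mem_adiniSpace_of_mem_multiaffine c (X_mul_mem_multiaffine_insert (by simp) hp)
  have expand : X k * (a + X k * b) =
      X k * a + (X k - C (c k)) ^ 2 * b + C (2 * c k) * (X k * b) - C (c k ^ 2) * b := by
    simp only [map_mul, map_pow, map_ofNat]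
    ring
  rw [expand]
  exact sub_mem (add_mem (add_mem (X_mul_mem ha) (sq_mul_mem_adiniSpace c k hb))
    (C_mul_mem_adiniSpace _ (X_mul_mem hb)))
    (C_mul_mem_adiniSpace _ (mem_adiniSpace_of_mem_multiaffine c hb))

lemma adiniSpace_le_adiniSpace (c c' : σ → R) (s : Set σ) : adiniSpace c s ≤ adiniSpace c' s := by
  refine sup_le (fun q hq => mem_adiniSpace_of_mem_multiaffine c' hq) (Submodule.span_le.mpr ?_)
  rintro _ ⟨k, q, hq, rfl⟩
  have recentre : (X k - C (c k)) ^ 2 * q = (X k - C (c' k)) ^ 2 * q +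
      C (2 * (c' k - c k)) * (X k * q) + C (c k ^ 2 - c' k ^ 2) * q := by
    simp only [map_mul, map_sub, map_pow, map_ofNat]
    ring
  have X_mul_mem : X k * q ∈ adiniSpace c' s :=
    adiniSpace_mono c' Set.sdiff_subset (X_mul_mem_adiniSpace_sdiff_singleton c' k hq)
  rw [SetLike.mem_coe, recentre]
  exact add_mem (add_mem (sq_mul_mem_adiniSpace c' k hq) (C_mul_mem_adiniSpace _ X_mul_mem))
    (C_mul_mem_adiniSpace _ (mem_adiniSpace_of_mem_multiaffine c' hq))

lemma pderiv_sq_mul_mem_adiniSpace (c : σ → R) (i k : σ) (hq : q ∈ multiaffine R s) :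
    pderiv i ((X k - C (c k)) ^ 2 * q) ∈ adiniSpace c (s \ {i}) := by
  have sq_mul_pderiv_mem : (X k - C (c k)) ^ 2 * pderiv i q ∈ adiniSpace c (s \ {i}) :=
    sq_mul_mem_adiniSpace c k (pderiv_mem_multiaffine_sdiff_singleton i hq)
  rw [pderiv_mul]
  refine add_mem ?_ sq_mul_pderiv_mem
  obtain rfl | hki := eq_or_ne k i
  · have pderiv_sq_mul : pderiv k ((X k - C (c k)) ^ 2) * q =
        C 2 * (X k * q) - C (2 * c k) * q := by
      simp only [pderiv_pow, map_sub, pderiv_X_self, pderiv_C, map_mul, map_ofNat]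
      push_cast
      ring
    rw [pderiv_sq_mul]
    exact sub_mem (C_mul_mem_adiniSpace _ (X_mul_mem_adiniSpace_sdiff_singleton c k hq))
      (C_mul_mem_adiniSpace _ (mem_adiniSpace_of_mem_multiaffine c hq))
  · simp [pderiv_X_of_ne hki]

theorem adini_pderiv_mem_general (c c' : σ → R) (i : σ) (hw : w ∈ adiniSpace c s) :
    pderiv i w ∈ adiniSpace c' (s \ {i}) := by
  refine adiniSpace_le_adiniSpace c c' _ ?_
  suffices le_comap :
      adiniSpace c s ≤ (adiniSpace c (s \ {i})).comap (pderiv i).toLinearMap from le_comap hw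
  refine sup_le (fun q hq => ?_) (Submodule.span_le.mpr ?_)
  · rw [Submodule.mem_comap]
    exact mem_adiniSpace_of_mem_multiaffine c (pderiv_mem_multiaffine_sdiff_singleton i hq)
  · rintro _ ⟨k, q, hq, rfl⟩
    rw [SetLike.mem_coe, Submodule.mem_comap]
    exact pderiv_sq_mul_mem_adiniSpace c i k hq

end AdiniSpace

lemma Q1_eq_multiaffine (d : ℕ) : Q1 d = multiaffine ℝ Set.univ := by
  rw [Q1, multiaffine, restrictSupport_eq_span]
  congr 1
  ext p
  simp [squarefreeExponents, eq_comm]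

lemma Q1i_eq_multiaffine (d : ℕ) (i : Fin d) : Q1i d i = multiaffine ℝ (Set.univ \ {i}) := by
  rw [Q1i, multiaffine, restrictSupport_eq_span]
  congr 1
  ext p
  simp [squarefreeExponents, eq_comm, and_assoc]

lemma PA_eq_adiniSpace (d : ℕ) : PA d = adiniSpace 0 Set.univ := by
  simp [PA, adiniSpace, Q1_eq_multiaffine]

/-- for every `w ∈ P_A` and every `i`, the partial derivative `∂w/∂x_i`
belongs to `Q₁ + span{(x_j − c_j)² q̂ : 1 ≤ j ≤ d, q̂ ∈ Q₁^i}`. -/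
theorem adini_pderiv_mem (d : ℕ) (hd : 1 ≤ d) (c h : Fin d → ℝ) (hh : ∀ i, 0 < h i)
    (w : MvPolynomial (Fin d) ℝ) (hw : w ∈ PA d) (i : Fin d) :
    pderiv i w ∈
      Q1 d ⊔ Submodule.span ℝ
        {p | ∃ j : Fin d, ∃ q ∈ Q1i d i, p = (X j - C (c j)) ^ 2 * q} := by
  rw [Q1_eq_multiaffine, Q1i_eq_multiaffine]
  exact adini_pderiv_mem_general 0 c i (PA_eq_adiniSpace d ▸ hw)
end

section
/- Let w ∈ P_A, fix i with 1 ≤ i ≤ d, and let q ∈ Q₁ be a polynomial that agrees with ∂w/∂x_i at every vertex of K (i.e. q is the Q₁ vertex interpolant of ∂w/∂x_i). Then the residual ∂w/∂x_i − q belongs to S^i. -/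
open MvPolynomial MeasureTheory

/-!
Let `e_k` be the `k`-th unit multi-index and `m_j = (x_j - c_j)² - h_j²`, and bound the degree of a
polynomial in each variable separately. Differentiation turns `x_j² Q₁` into polynomials of
multidegree at most `1 - e_i + 2 e_j`. Dividing by `m_j`, which is monic of degree `2` in `x_j`,
leaves a quotient of multidegree at most `1 - e_i`, hence in `Q₁^i`, and a remainder in `Q₁`. So
`∂_i P_A ⊆ Q₁ + S^i`. Since `S^i` vanishes at the vertices of `K` and a polynomial in `Q₁` is
determined by its vertex values, an element of `Q₁ + S^i` vanishing at the vertices lies in `S^i`.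
-/

section Multidegree

variable {σ R : Type*}

section CommSemiring

variable [CommSemiring R] {m n : σ → ℕ} {p q : MvPolynomial σ R}

variable (R) in
/-- The polynomials of degree at most `n j` in each variable `x_j`, encoded by a
restriction on the exponents. The spaces `Q₁` and `Q₁^i` are the cases `n = 1` and
`n = 1 - e_i`. -/
noncomputable def multidegreeLE (n : σ → ℕ) : Submodule R (MvPolynomial σ R) :=
  restrictSupport R {α | ∀ j, α j ≤ n j}

lemma multidegreeLE_eq_span (n : σ → ℕ) :
    multidegreeLE R n = Submodule.span R ((monomial · 1) '' {α | ∀ j, α j ≤ n j}) :=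
  restrictSupport_eq_span R _

lemma mem_multidegreeLE : p ∈ multidegreeLE R n ↔ ∀ α ∈ p.support, ∀ j, α j ≤ n j :=
  Iff.rfl

lemma mem_multidegreeLE_iff_degreeOf_le :
    p ∈ multidegreeLE R n ↔ ∀ j, degreeOf j p ≤ n j := by
  simp only [mem_multidegreeLE, degreeOf_le_iff]
  exact ⟨fun hp j α hα ↦ hp α hα j, fun hp α hα j ↦ hp j α hα⟩

lemma monomial_mem_multidegreeLE {α : σ →₀ ℕ} (hα : ∀ j, α j ≤ n j) (r : R) :
    monomial α r ∈ multidegreeLE R n :=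
  (monomial_mem_restrictSupport R).2 (.inl hα)

lemma multidegreeLE_mono (hmn : m ≤ n) : multidegreeLE R m ≤ multidegreeLE R n :=
  restrictSupport_mono R fun _ hα j ↦ (hα j).trans (hmn j)

lemma mul_mem_multidegreeLE (hp : p ∈ multidegreeLE R m) (hq : q ∈ multidegreeLE R n) :
    p * q ∈ multidegreeLE R (m + n) := by
  rw [mem_multidegreeLE_iff_degreeOf_le] at *
  exact fun j ↦ (degreeOf_mul_le j p q).trans (add_le_add (hp j) (hq j))

variable [DecidableEq σ]

lemma single_one_le_one (i : σ) : (Pi.single i 1 : σ → ℕ) ≤ 1 :=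
  update_le_iff.2 ⟨le_rfl, fun _ _ ↦ zero_le_one⟩

lemma X_pow_mem_multidegreeLE (j : σ) (k : ℕ) :
    (X j ^ k : MvPolynomial σ R) ∈ multidegreeLE R (Pi.single j k) := by
  rw [X_pow_eq_monomial]
  exact monomial_mem_multidegreeLE (fun l ↦ (congrFun (Finsupp.single_eq_pi_single j k) l).le) 1

lemma pderiv_mem_multidegreeLE (i : σ) (hp : p ∈ multidegreeLE R n) :
    pderiv i p ∈ multidegreeLE R (n - Pi.single i 1) := by
  rw [mem_multidegreeLE] at hp ⊢
  intro α hα j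
  have hcoeff : coeff (α + Finsupp.single i 1) p ≠ 0 := fun h0 ↦
    mem_support_iff.1 hα (by rw [coeff_pderiv, h0, zero_mul])
  have hle := hp _ (mem_support_iff.2 hcoeff) j
  rw [Finsupp.add_apply, Finsupp.single_eq_pi_single] at hle
  exact Nat.le_sub_of_add_le hle

end CommSemiring

section Division

variable [CommRing R] {g : Polynomial R}

lemma monomial_single_natDegree_add (hg : g.Monic) (j : σ) (β : σ →₀ ℕ) :
    monomial (Finsupp.single j g.natDegree + β) (1 : R) =
      Polynomial.aeval (X j) g * monomial β 1 -
        ∑ l ∈ Finset.range g.natDegree, g.coeff l • monomial (Finsupp.single j l + β) 1 := by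
  have haeval : Polynomial.aeval (X j : MvPolynomial σ R) g =
      X j ^ g.natDegree + ∑ l ∈ Finset.range g.natDegree, g.coeff l • X j ^ l := by
    rw [Polynomial.aeval_eq_sum_range, Finset.sum_range_succ, hg.coeff_natDegree, one_smul,
      add_comm]
  simp only [haeval, monomial_single_add, add_mul, Finset.sum_mul, smul_mul_assoc,
    add_sub_cancel_right]

variable [DecidableEq σ] {n : σ → ℕ}

lemma monomial_mem_sup_map_mulLeft_aeval (hg : g.Monic) (j : σ) (α : σ →₀ ℕ)
    (hα : ∀ t, α t ≤ n t + Pi.single (M := fun _ ↦ ℕ) j g.natDegree t) :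
    monomial α (1 : R) ∈ multidegreeLE R (n ⊔ Pi.single j (g.natDegree - 1)) ⊔
      (multidegreeLE R n).map (LinearMap.mulLeft R (Polynomial.aeval (X j) g)) := by
  induction hN : α j using Nat.strong_induction_on generalizing α with
  | _ N ih =>
    rcases lt_or_ge (α j) g.natDegree with hlt | hge
    · refine Submodule.mem_sup_left (monomial_mem_multidegreeLE (fun t ↦ ?_) 1)
      grind [Pi.sup_apply]
    · obtain ⟨β, rfl⟩ := exists_add_of_le (Finsupp.single_le_iff.2 hge)
      have hβ : ∀ t, β t ≤ n t := fun t ↦ by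
        have ht := hα t
        rwa [Finsupp.add_apply, Finsupp.single_eq_pi_single, add_comm, add_le_add_iff_right] at ht
      rw [monomial_single_natDegree_add hg]
      refine sub_mem (Submodule.mem_sup_right
        (Submodule.mem_map_of_mem (monomial_mem_multidegreeLE hβ 1)))
        (sum_mem fun l hl ↦ Submodule.smul_mem _ _ ?_)
      have hl : l < g.natDegree := Finset.mem_range.1 hl
      have hlower : (Finsupp.single j l + β) j < N := by
        rw [← hN]
        simpa using hl
      refine ih _ hlower _ (fun t ↦ ?_) rfl
      grind [Finsupp.add_apply]

lemma multidegreeLE_le_sup_map_mulLeft_aeval (hg : g.Monic) (n : σ → ℕ) (j : σ) :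
    multidegreeLE R (n + Pi.single j g.natDegree) ≤
      multidegreeLE R (n ⊔ Pi.single j (g.natDegree - 1)) ⊔
        (multidegreeLE R n).map (LinearMap.mulLeft R (Polynomial.aeval (X j) g)) := by
  rw [multidegreeLE_eq_span, Submodule.span_le, Set.image_subset_iff]
  exact fun α hα ↦ monomial_mem_sup_map_mulLeft_aeval hg j α hα

end Division

end Multidegree

section Adini

variable {d : ℕ} {c h : Fin d → ℝ} {i : Fin d} {p w : MvPolynomial (Fin d) ℝ}

lemma Q1_eq_multidegreeLE (d : ℕ) : Q1 d = multidegreeLE ℝ 1 := by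
  rw [multidegreeLE_eq_span]
  simp only [Q1, Set.image, Set.mem_ofPred_eq, Pi.one_apply, eq_comm]

lemma Q1i_eq_multidegreeLE (i : Fin d) : Q1i d i = multidegreeLE ℝ (1 - Pi.single i 1) := by
  have hexp (α : Fin d →₀ ℕ) :
      (∀ j, α j ≤ (1 - Pi.single i 1 : Fin d → ℕ) j) ↔ (∀ j, α j ≤ 1) ∧ α i = 0 := by
    refine ⟨fun hα ↦ ⟨fun j ↦ (hα j).trans (Nat.sub_le _ _), by simpa using hα i⟩, ?_⟩
    rintro ⟨hα, hαi⟩ j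
    rcases eq_or_ne j i with rfl | hji
    · simp [hαi]
    · simpa [hji] using hα j
  rw [multidegreeLE_eq_span]
  simp only [Q1i, Set.image, Set.mem_ofPred_eq, hexp, and_assoc, eq_comm]

lemma multidegreeLE_add_single_two_le_Q1_sup_Si (c h : Fin d → ℝ) (i j : Fin d) :
    multidegreeLE ℝ (1 - Pi.single i 1 + Pi.single j 2) ≤ Q1 d ⊔ Si d c h i := by
  let g : Polynomial ℝ := (Polynomial.X - Polynomial.C (c j)) ^ 2 - Polynomial.C (h j ^ 2)
  have hgdeg : g.natDegree = 2 := by simp only [g]; compute_degree!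
  have hg : g.Monic := by simp only [g]; monicity!
  have hdiv := multidegreeLE_le_sup_map_mulLeft_aeval hg (1 - Pi.single i 1) j
  rw [hgdeg] at hdiv
  refine hdiv.trans (sup_le_sup ?_ ?_)
  · rw [Q1_eq_multidegreeLE]
    exact multidegreeLE_mono (sup_le tsub_le_self (single_one_le_one j))
  · rw [← Q1i_eq_multidegreeLE, Submodule.map_le_iff_le_comap]
    exact fun q hq ↦ Submodule.subset_span ⟨j, q, hq, by simp [g, algebraMap_eq]⟩

lemma pderiv_mem_Q1_sup_Si (c h : Fin d → ℝ) (i : Fin d) (hw : w ∈ PA d) :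
    pderiv i w ∈ Q1 d ⊔ Si d c h i := by
  suffices hPA : PA d ≤ (Q1 d ⊔ Si d c h i).comap (pderiv i).toLinearMap from
    Submodule.mem_comap.1 (hPA hw)
  refine sup_le (fun q hq ↦ Submodule.mem_comap.2 (Submodule.mem_sup_left ?_))
    (Submodule.span_le.2 ?_)
  · rw [Q1_eq_multidegreeLE] at hq ⊢
    exact multidegreeLE_mono tsub_le_self (pderiv_mem_multidegreeLE i hq)
  · rintro _ ⟨j, q, hq, rfl⟩
    rw [Q1_eq_multidegreeLE] at hq
    rw [SetLike.mem_coe, Submodule.mem_comap, Derivation.coeFn_coe]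
    have hmem : pderiv i (X j ^ 2 * q) ∈
        multidegreeLE ℝ (Pi.single j 2 + 1 - Pi.single i 1) :=
      pderiv_mem_multidegreeLE i (mul_mem_multidegreeLE (X_pow_mem_multidegreeLE j 2) hq)
    rw [add_comm, ← tsub_add_eq_add_tsub (single_one_le_one i)] at hmem
    exact multidegreeLE_add_single_two_le_Q1_sup_Si c h i j hmem

lemma eval_eq_zero_of_mem_Si {a : Fin d → ℝ} (ha : IsVertex c h a) (hp : p ∈ Si d c h i) :
    eval a p = 0 := by
  suffices hSi : Si d c h i ≤ LinearMap.ker (aeval a).toLinearMap by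
    simpa [coe_aeval_eq_eval] using hSi hp
  refine Submodule.span_le.2 ?_
  rintro _ ⟨j, q, -, rfl⟩
  have hbubble : (a j - c j) ^ 2 - h j ^ 2 = 0 := by
    rcases ha j with hj | hj <;> rw [hj] <;> ring
  simp [hbubble]

lemma eq_zero_of_mem_Q1_of_eval_vertex_eq_zero (hh : ∀ i, h i ≠ 0) (hp : p ∈ Q1 d)
    (hzero : ∀ a, IsVertex c h a → eval a p = 0) : p = 0 := by
  rw [Q1_eq_multidegreeLE, mem_multidegreeLE_iff_degreeOf_le] at hp
  refine eq_zero_of_eval_zero_at_prod_finset p (fun k ↦ {c k - h k, c k + h k}) (fun k ↦ ?_)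
    fun a ha ↦ hzero a fun k ↦ by simpa using ha k
  have hne : c k - h k ≠ c k + h k := fun heq ↦ hh k (by linarith)
  rw [Finset.card_pair hne]
  exact Nat.lt_succ_of_le (hp k)

lemma mem_Si_of_mem_Q1_sup_Si_of_eval_vertex_eq_zero (hh : ∀ i, h i ≠ 0)
    (hp : p ∈ Q1 d ⊔ Si d c h i) (hzero : ∀ a, IsVertex c h a → eval a p = 0) :
    p ∈ Si d c h i := by
  obtain ⟨r, hr, s, hs, rfl⟩ := Submodule.mem_sup.1 hp
  have hr0 : r = 0 := eq_zero_of_mem_Q1_of_eval_vertex_eq_zero hh hr fun a ha ↦ by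
    simpa [eval_eq_zero_of_mem_Si ha hs] using hzero a ha
  rwa [hr0, zero_add]

end Adini

/-- if `w ∈ P_A` and `q ∈ Q₁` is the `Q₁` vertex interpolant of `∂w/∂x_i`,
then the residual `∂w/∂x_i − q` belongs to `S^i`. -/
theorem adini_residual_mem_Si (d : ℕ) (hd : 1 ≤ d) (c h : Fin d → ℝ) (hh : ∀ i, 0 < h i)
    (w : MvPolynomial (Fin d) ℝ) (hw : w ∈ PA d) (i : Fin d)
    (q : MvPolynomial (Fin d) ℝ) (hq : q ∈ Q1 d)
    (hagree : ∀ a : Fin d → ℝ, IsVertex c h a → eval a q = eval a (pderiv i w)) :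
    pderiv i w - q ∈ Si d c h i := by
  refine mem_Si_of_mem_Q1_sup_Si_of_eval_vertex_eq_zero (fun k ↦ (hh k).ne') ?_ fun a ha ↦ ?_
  · exact sub_mem (pderiv_mem_Q1_sup_Si c h i hw) (Submodule.mem_sup_left hq)
  · rw [map_sub, hagree a ha, sub_self]
end

section
/- (Lemma 2.1) Let w ∈ P_A, fix i with 1 ≤ i ≤ d, and let q ∈ Q₁ be a polynomial that agrees with ∂w/∂x_i at every vertex of K. Then the residual r = ∂w/∂x_i − q takes equal values on the two faces of K orthogonal to the x_i axis: for every y ∈ ℝ^d, the value of r at the point obtained from y by replacing its i-th coordinate with c_i + h_i equals the value of r at the point obtained from y by replacing its i-th coordinate with c_i − h_i. -/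
open MvPolynomial MeasureTheory

/-!
Substituting `x_i = s` and `x_i = t` into a monomial of `∂w/∂x_i - q` and subtracting gives zero
unless `x_i` occurs in it. The monomials of `∂w/∂x_i` in which `x_i` occurs come from monomials of
`w` of degree at least two in `x_i`, and for `w ∈ P_A` these have degree at most one in every other
variable. So the difference of the two face values of the residual is a polynomial of degree at most
one in each variable. It vanishes at the vertices of `K`, and hence identically.
-/

open scoped Finset

section Support

variable {σ R : Type*} [CommSemiring R]

theorem monomial_mul_mem_restrictSupport {S T : Set (σ →₀ ℕ)} {β : σ →₀ ℕ} {p : MvPolynomial σ R}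
    (r : R) (hp : p ∈ restrictSupport R S) (hST : ∀ α ∈ S, β + α ∈ T) :
    monomial β r * p ∈ restrictSupport R T := by
  have hβ : monomial β r ∈ restrictSupport R {β} := by simp
  have hmul := Submodule.mul_mem_mul hβ hp
  rw [← restrictSupport_add] at hmul
  refine restrictSupport_mono R ?_ hmul
  rintro _ ⟨_, rfl, α, hα, rfl⟩
  exact hST α hα

theorem pderiv_mem_restrictSupport {S : Set (σ →₀ ℕ)} {p : MvPolynomial σ R}
    (hp : p ∈ restrictSupport R S) (i : σ) :
    pderiv i p ∈ restrictSupport R {α | α + Finsupp.single i 1 ∈ S} := by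
  rw [mem_restrictSupport_iff]
  intro α hα
  rw [Finset.mem_coe, mem_support_iff, coeff_pderiv] at hα
  exact hp (mem_support_iff.mpr (left_ne_zero_of_mul hα))

/-- The exponents of the monomials which, if of degree at least `n` in `x_i`, have degree at most
`m` in every other variable. The case `n = 2`, `m = 1` covers the monomials of the Adini space,
whatever the index `i`; differentiating in `x_i` lowers `n` by one. -/
def boundedOffAxis (i : σ) (n m : ℕ) : Set (σ →₀ ℕ) :=
  {α | n ≤ α i → ∀ k ≠ i, α k ≤ m}

theorem restrictDegree_le_restrictSupport_boundedOffAxis (i : σ) (n m : ℕ) :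
    restrictDegree σ R m ≤ restrictSupport R (boundedOffAxis i n m) :=
  restrictSupport_mono R fun _ hα _ k _ => hα k

theorem pderiv_mem_restrictSupport_boundedOffAxis {i : σ} {n m : ℕ} {p : MvPolynomial σ R}
    (hp : p ∈ restrictSupport R (boundedOffAxis i (n + 1) m)) :
    pderiv i p ∈ restrictSupport R (boundedOffAxis i n m) := by
  refine restrictSupport_mono R (fun α hα hn k hk => ?_) (pderiv_mem_restrictSupport hp i)
  simpa [hk.symm] using hα (by simpa using hn) k hk

theorem X_sq_mul_mem_restrictSupport_boundedOffAxis {q : MvPolynomial σ R}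
    (hq : q ∈ restrictDegree σ R 1) (i j : σ) :
    X j ^ 2 * q ∈ restrictSupport R (boundedOffAxis i 2 1) := by
  rw [X_pow_eq_monomial]
  refine monomial_mul_mem_restrictSupport 1 hq fun α hα hi k hk => ?_
  have hji : j = i := by
    by_contra hne
    have : 2 ≤ α i := by simpa [hne] using hi
    exact absurd (hα i) (by lia)
  subst hji
  simpa [hk.symm] using hα k

end Support

theorem eq_zero_of_mem_restrictDegree_of_eval_grid {σ R : Type*} [Finite σ] [CommRing R]
    [IsDomain R] {m : ℕ} {p : MvPolynomial σ R} (hp : p ∈ restrictDegree σ R m)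
    {S : σ → Finset R} (hS : ∀ k, m < #(S k))
    (hgrid : ∀ v, (∀ k, v k ∈ S k) → eval v p = 0) : p = 0 :=
  eq_zero_of_eval_zero_at_prod_finset p S
    (fun k => (degreeOf_le_iff.mpr fun _ hα => hp hα k).trans_lt (hS k)) hgrid

section Specialize

variable {σ R : Type*} [DecidableEq σ]

/-- Substitution of the constant `t` for `x_i`, that is, restriction to the hyperplane `x_i = t`.
The result is kept in the same polynomial ring, where it no longer involves `x_i`. -/
noncomputable def specializeVar [CommSemiring R] (i : σ) (t : R) :
    MvPolynomial σ R →ₐ[R] MvPolynomial σ R :=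
  aeval (Function.update X i (C t))

theorem eval_specializeVar [CommSemiring R] (i : σ) (t : R) (y : σ → R) (p : MvPolynomial σ R) :
    eval y (specializeVar i t p) = eval (Function.update y i t) p := by
  have hcomp : (aeval y).comp (specializeVar i t) = aeval (Function.update y i t) := by
    ext k
    rcases eq_or_ne k i with rfl | hk
    · simp [specializeVar]
    · simp [specializeVar, hk]
  simpa using DFunLike.congr_fun hcomp p

theorem specializeVar_monomial [CommSemiring R] (i : σ) (t : R) (α : σ →₀ ℕ) (a : R) :
    specializeVar i t (monomial α a) = monomial (α.erase i) (a * t ^ α i) := by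
  have hfactor : (monomial α a : MvPolynomial σ R) = X i ^ α i * monomial (α.erase i) a := by
    rw [X_pow_eq_monomial, monomial_mul, Finsupp.single_add_erase, one_mul]
  have hfix : specializeVar i t (monomial (α.erase i) a) = monomial (α.erase i) a := by
    rw [specializeVar, aeval_monomial, monomial_eq (s := α.erase i), algebraMap_eq]
    congr 1
    refine Finsupp.prod_congr fun k hk => ?_
    rw [Function.update_of_ne (by rintro rfl; simp at hk)]
  rw [hfactor, map_mul, hfix, map_pow, specializeVar, aeval_X, Function.update_self, ← C_pow,
    C_mul_monomial, mul_comm]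

variable [CommRing R] {i : σ} {m : ℕ} {p : MvPolynomial σ R}

theorem specializeVar_sub_specializeVar_mem_restrictDegree
    (hp : p ∈ restrictSupport R (boundedOffAxis i 1 m)) (s t : R) :
    specializeVar i s p - specializeVar i t p ∈ restrictDegree σ R m := by
  suffices hle : restrictSupport R (boundedOffAxis i 1 m) ≤ (restrictDegree σ R m).comap
      ((specializeVar i s).toLinearMap - (specializeVar i t).toLinearMap) from hle hp
  rw [restrictSupport_eq_span, Submodule.span_le]
  rintro _ ⟨α, hα, rfl⟩
  change specializeVar i s (monomial α 1) - specializeVar i t (monomial α 1) ∈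
    restrictDegree σ R m
  rw [specializeVar_monomial, specializeVar_monomial, ← map_sub, restrictDegree,
    monomial_mem_restrictSupport]
  rcases Nat.eq_zero_or_pos (α i) with hi | hi
  · simp [hi]
  · refine .inl fun k => ?_
    rcases eq_or_ne k i with rfl | hk
    · simp
    · simpa [hk] using hα hi k hk

variable [IsDomain R] [Finite σ]

theorem eval_update_eq_of_forall_grid {S : σ → Finset R} (hS : ∀ k, m < #(S k))
    (hp : p ∈ restrictSupport R (boundedOffAxis i 1 m)) {s t : R}
    (hgrid : ∀ v, (∀ k, v k ∈ S k) →
      eval (Function.update v i s) p = eval (Function.update v i t) p) (y : σ → R) :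
    eval (Function.update y i s) p = eval (Function.update y i t) p := by
  have hzero : specializeVar i s p - specializeVar i t p = 0 :=
    eq_zero_of_mem_restrictDegree_of_eval_grid
      (specializeVar_sub_specializeVar_mem_restrictDegree hp s t) hS fun v hv => by
        rw [map_sub, eval_specializeVar, eval_specializeVar, hgrid v hv, sub_self]
  rw [← eval_specializeVar, ← eval_specializeVar, sub_eq_zero.mp hzero]

theorem adini_residual_equal_on_faces_general {S : σ → Finset R} (hS : ∀ k, m < #(S k))
    {w q : MvPolynomial σ R} (hw : w ∈ restrictSupport R (boundedOffAxis i 2 m))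
    (hq : q ∈ restrictSupport R (boundedOffAxis i 1 m))
    (hagree : ∀ v, (∀ k, v k ∈ S k) → eval v q = eval v (pderiv i w))
    {s t : R} (hs : s ∈ S i) (ht : t ∈ S i) (y : σ → R) :
    eval (Function.update y i s) (pderiv i w - q) =
      eval (Function.update y i t) (pderiv i w - q) := by
  have hres : pderiv i w - q ∈ restrictSupport R (boundedOffAxis i 1 m) :=
    sub_mem (pderiv_mem_restrictSupport_boundedOffAxis hw) hq
  have hvanish : ∀ v, (∀ k, v k ∈ S k) → ∀ r ∈ S i,
      eval (Function.update v i r) (pderiv i w - q) = 0 := fun v hv r hr => by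
    rw [map_sub, hagree _ (Function.forall_update_iff v _ |>.mpr ⟨hr, fun k _ => hv k⟩), sub_self]
  exact eval_update_eq_of_forall_grid hS hres
    (fun v hv => (hvanish v hv s hs).trans (hvanish v hv t ht).symm) y

end Specialize

theorem Q1_eq_restrictDegree (d : ℕ) : Q1 d = restrictDegree (Fin d) ℝ 1 := by
  rw [Q1, restrictDegree, restrictSupport_eq_span]
  congr 1
  ext p
  simp [eq_comm]

theorem PA_le_restrictSupport_boundedOffAxis {d : ℕ} (i : Fin d) :
    PA d ≤ restrictSupport ℝ (boundedOffAxis i 2 1) := by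
  rw [PA, Q1_eq_restrictDegree]
  refine sup_le (restrictDegree_le_restrictSupport_boundedOffAxis i 2 1) (Submodule.span_le.mpr ?_)
  rintro _ ⟨j, q, hq, rfl⟩
  exact X_sq_mul_mem_restrictSupport_boundedOffAxis hq i j

/-- Lemma 2.1: for `w ∈ P_A` and `q ∈ Q₁` the vertex interpolant of
`∂w/∂x_i`, the residual `∂w/∂x_i − q` takes equal values on the two faces of `K`
orthogonal to the `x_i` axis. -/
theorem adini_residual_equal_on_faces (d : ℕ) (hd : 1 ≤ d)
    (c h : Fin d → ℝ) (hh : ∀ i, 0 < h i)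
    (w : MvPolynomial (Fin d) ℝ) (hw : w ∈ PA d) (i : Fin d)
    (q : MvPolynomial (Fin d) ℝ) (hq : q ∈ Q1 d)
    (hagree : ∀ a : Fin d → ℝ, IsVertex c h a → eval a q = eval a (pderiv i w)) :
    ∀ y : Fin d → ℝ,
      eval (Function.update y i (c i + h i)) (pderiv i w - q) =
        eval (Function.update y i (c i - h i)) (pderiv i w - q) := by
  have hcard : ∀ k, 1 < #({c k - h k, c k + h k} : Finset ℝ) := fun k => by
    rw [Finset.card_pair (by linarith [hh k])]
    exact one_lt_two
  exact adini_residual_equal_on_faces_general hcard (PA_le_restrictSupport_boundedOffAxis i hw)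
    (restrictDegree_le_restrictSupport_boundedOffAxis i 1 1 (Q1_eq_restrictDegree d ▸ hq))
    (fun a ha => hagree a fun k => by simpa using ha k) (by simp) (by simp)
end

section
/- Let u ∈ ℝ[x_1,…,x_d] have total degree at most 4, so that D_i := ∂⁴u/∂x_i⁴ and D_{ij} := ∂⁴u/∂x_i²∂x_j² are constants. Define E = (1/24)·Σ_{i=1}^d D_i·((x_i − c_i)² − h_i²)² + (1/4)·Σ_{1 ≤ i < j ≤ d} D_{ij}·((x_i − c_i)² − h_i²)·((x_j − c_j)² − h_j²). Then: (1) u − E belongs to the Adini shape function space P_A; (2) E(a) = 0 and ∇E(a) = 0 at every vertex a of K. (Hence u − E is the Adini canonical interpolant of u on K, matching u and ∇u at all vertices.) -/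
open MvPolynomial MeasureTheory

/-!
In terms of monomials, `P_A` contains every polynomial none of whose monomials is divisible by some
`x_i² x_j²` (with `i = j` allowed), that is, every polynomial annihilated by all `∂_i⁴` and
`∂_i² ∂_j²`. The polynomial `E` is normalized so that these derivatives of `E` and of `u` agree: up
to terms of degree at most three, the product of two of the quadratics `(x_i − c_i)² − h_i²` is
`x_i² x_j²`. Hence `u − E ∈ P_A`. Each of these quadratics vanishes at every vertex `a`, so `E` lies
in the square of the maximal ideal at `a`, whose elements vanish at `a` together with their
gradients.
-/

section IteratedPartialDerivatives

variable {σ R : Type*} [CommSemiring R]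

theorem coeff_pow_pderiv (i : σ) (n : ℕ) (p : MvPolynomial σ R) (β : σ →₀ ℕ) :
    coeff β (((pderiv (R := R) i).toLinearMap ^ n : Module.End R (MvPolynomial σ R)) p) =
      coeff (β + Finsupp.single i n) p * ((β i + 1).ascFactorial n : R) := by
  induction n generalizing p with
  | zero => simp
  | succ n ih =>
    rw [pow_succ, Module.End.mul_apply, ih, Derivation.coeFn_coe, coeff_pderiv, add_assoc,
      ← Finsupp.single_add, Nat.ascFactorial_succ]
    simp only [Finsupp.add_apply, Finsupp.single_eq_same, Nat.cast_mul, Nat.cast_add, Nat.cast_one]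
    ring

theorem coeff_list_prod_pow_pderiv (α : σ → ℕ) {L : List σ} (hL : L.Nodup)
    (p : MvPolynomial σ R) (β : σ →₀ ℕ) :
    coeff β ((L.map fun i =>
        ((pderiv (R := R) i).toLinearMap : Module.End R (MvPolynomial σ R)) ^ α i).prod p) =
      coeff (β + (L.map fun i => Finsupp.single i (α i)).sum) p *
        (L.map fun i => ((β i + 1).ascFactorial (α i) : R)).prod := by
  induction L generalizing β with
  | nil => simp
  | cons i L ih =>
    obtain ⟨hi, hL⟩ := List.nodup_cons.mp hL
    have hfactors : (L.map fun j =>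
          (((β + Finsupp.single i (α i)) j + 1).ascFactorial (α j) : R)) =
        L.map fun j => ((β j + 1).ascFactorial (α j) : R) := by
      refine List.map_congr_left fun j hj => ?_
      have hij : j ≠ i := fun hji => hi (hji ▸ hj)
      rw [Finsupp.add_apply, Finsupp.single_eq_of_ne hij, add_zero]
    simp only [List.map_cons, List.prod_cons, List.sum_cons, Module.End.mul_apply]
    rw [coeff_pow_pderiv, ih hL, hfactors, add_assoc]
    ring

end IteratedPartialDerivatives

section PderivPow

variable {d : ℕ}

theorem coeff_pderivPow (α β : Fin d →₀ ℕ) (p : MvPolynomial (Fin d) ℝ) :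
    coeff β (pderivPow α p) =
      coeff (β + α) p * ∏ i, ((β i + 1).ascFactorial (α i) : ℝ) := by
  rw [pderivPow, List.ofFn_eq_map, coeff_list_prod_pow_pderiv _ (List.nodup_finRange d),
    ← List.ofFn_eq_map, ← List.ofFn_eq_map, List.sum_ofFn, List.prod_ofFn,
    Finsupp.univ_sum_single]

theorem coeff_eq_zero_of_pderivPow_eq_zero {α γ : Fin d →₀ ℕ} {p : MvPolynomial (Fin d) ℝ}
    (hp : pderivPow α p = 0) (hαγ : α ≤ γ) : coeff γ p = 0 := by
  have hcoeff := coeff_pderivPow α (γ - α) p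
  rw [hp, coeff_zero, tsub_add_cancel_of_le hαγ, eq_comm, mul_eq_zero] at hcoeff
  refine hcoeff.resolve_right (Finset.prod_ne_zero_iff.mpr fun i _ => ?_)
  exact_mod_cast (Nat.ascFactorial_pos _ _).ne'

theorem pderivPow_eq_C_of_totalDegree_le {α : Fin d →₀ ℕ} {p : MvPolynomial (Fin d) ℝ}
    (hp : p.totalDegree ≤ α.degree) :
    pderivPow α p = C (coeff α p * ∏ i, ((α i).factorial : ℝ)) := by
  ext β
  rw [coeff_pderivPow, coeff_C]
  split_ifs with hβ
  · simp [← hβ, Nat.one_ascFactorial]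
  · have hdeg : p.totalDegree < (β + α).degree := by
      have := (Finsupp.degree_eq_zero_iff β).not.mpr (Ne.symm hβ)
      rw [map_add]
      omega
    rw [coeff_eq_zero_of_totalDegree_lt hdeg, zero_mul]

end PderivPow

section BiquadExponent

variable {σ : Type*}

/-- The exponent vector of the monomial `x_i² x_j²`. It also covers `x_i⁴`, as `j = i`, so that the
two kinds of fourth derivatives `∂_i⁴` and `∂_i² ∂_j²` can be treated alike. -/
noncomputable def biquadExponent (i j : σ) : σ →₀ ℕ :=
  Finsupp.single i 2 + Finsupp.single j 2

theorem biquadExponent_comm (i j : σ) : biquadExponent i j = biquadExponent j i :=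
  add_comm _ _

theorem biquadExponent_eq_iff {i j k l : σ} :
    biquadExponent i j = biquadExponent k l ↔ i = k ∧ j = l ∨ i = l ∧ j = k := by
  simp [biquadExponent, Finsupp.single_add_single_eq_single_add_single]

theorem degree_biquadExponent (i j : σ) : (biquadExponent i j).degree = 4 := by
  simp [biquadExponent]

theorem X_sq_mul_X_sq_eq_monomial {R : Type*} [CommSemiring R] (i j : σ) :
    (X i ^ 2 * X j ^ 2 : MvPolynomial σ R) = monomial (biquadExponent i j) 1 := by
  rw [X_pow_eq_monomial, X_pow_eq_monomial, monomial_mul, one_mul, biquadExponent]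

theorem coe_biquadExponent_self [DecidableEq σ] (i : σ) :
    ⇑(biquadExponent i i) = fun k => if k = i then 4 else 0 := by
  ext k
  by_cases hk : k = i <;> simp [biquadExponent, hk]

theorem coe_biquadExponent_of_ne [DecidableEq σ] {i j : σ} (hij : i ≠ j) :
    ⇑(biquadExponent i j) = fun k => if k = i then 2 else if k = j then 2 else 0 := by
  ext k
  by_cases hki : k = i
  · simp [biquadExponent, hki, hij]
  · by_cases hkj : k = j <;> simp [biquadExponent, hki, hkj, hij.symm]

theorem prod_factorial_biquadExponent_self [Fintype σ] (i : σ) :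
    ∏ k, (biquadExponent i i k).factorial = 24 := by
  classical
  rw [coe_biquadExponent_self, Finset.prod_eq_single i] <;> simp +contextual [Nat.factorial]

theorem prod_factorial_biquadExponent_of_ne [Fintype σ] {i j : σ} (hij : i ≠ j) :
    ∏ k, (biquadExponent i j k).factorial = 4 := by
  classical
  rw [coe_biquadExponent_of_ne hij, Finset.prod_eq_mul i j hij] <;>
    simp +contextual [hij.symm]

end BiquadExponent

section AdiniSpace

variable {d : ℕ}

theorem monomial_mem_Q1 {α : Fin d →₀ ℕ} (hα : ∀ i, α i ≤ 1) (r : ℝ) : monomial α r ∈ Q1 d := by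
  rw [← mul_one r, ← smul_eq_mul, ← smul_monomial]
  exact Submodule.smul_mem _ r (Submodule.subset_span ⟨α, hα, rfl⟩)

theorem monomial_mem_PA {α : Fin d →₀ ℕ}
    (hα : ∀ i j, ¬ biquadExponent i j ≤ α) (r : ℝ) :
    monomial α r ∈ PA d := by
  by_cases hQ1 : ∀ i, α i ≤ 1
  · exact Submodule.mem_sup_left (monomial_mem_Q1 hQ1 r)
  · obtain ⟨i, hi⟩ := not_forall.mp hQ1
    have hle : Finsupp.single i 2 ≤ α := Finsupp.single_le_iff.mpr (by omega)
    have hquot (j : Fin d) : (α - Finsupp.single i 2 : Fin d →₀ ℕ) j ≤ 1 := by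
      by_contra! hj
      exact hα i j (add_le_of_le_tsub_left_of_le hle (Finsupp.single_le_iff.mpr hj))
    refine Submodule.mem_sup_right (Submodule.subset_span
      ⟨i, monomial (α - Finsupp.single i 2) r, monomial_mem_Q1 hquot r, ?_⟩)
    rw [X_pow_eq_monomial, monomial_mul, one_mul, add_tsub_cancel_of_le hle]

theorem mem_PA_of_pderivPow_eq_zero {p : MvPolynomial (Fin d) ℝ}
    (hp : ∀ i j, i ≤ j → pderivPow (biquadExponent i j) p = 0) :
    p ∈ PA d := by
  rw [p.as_sum]
  refine Submodule.sum_mem _ fun α hα => monomial_mem_PA (fun i j hij => ?_) _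
  refine mem_support_iff.mp hα ?_
  rcases le_total i j with hle | hle
  · exact coeff_eq_zero_of_pderivPow_eq_zero (hp i j hle) hij
  · exact coeff_eq_zero_of_pderivPow_eq_zero (hp j i hle) (biquadExponent_comm i j ▸ hij)

end AdiniSpace

section FaceBubble

variable {σ R : Type*} [CommRing R]

/-- The quadratic `(x_i − c_i)² − h_i²`, whose zero set is the pair of hyperplanes carrying the
two faces of the box orthogonal to the `i`-th axis. -/
noncomputable def faceBubble (c h : σ → R) (i : σ) : MvPolynomial σ R :=
  (X i - C (c i)) ^ 2 - C (h i ^ 2)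

theorem totalDegree_faceBubble_sub_X_sq_le (c h : σ → R) (i : σ) :
    (faceBubble c h i - X i ^ 2).totalDegree ≤ 1 := by
  have hlinear : faceBubble c h i - X i ^ 2 = C (-2 * c i) * X i + C (c i ^ 2 - h i ^ 2) := by
    simp only [faceBubble, map_mul, map_neg, map_sub, map_pow, map_ofNat]
    ring
  rw [hlinear]
  refine (totalDegree_add _ _).trans (max_le ?_ ?_)
  · exact (isHomogeneous_C_mul_X _ i).totalDegree_le
  · exact (totalDegree_C _).trans_le zero_le_one

theorem totalDegree_faceBubble_le (c h : σ → R) (i : σ) :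
    (faceBubble c h i).totalDegree ≤ 2 := by
  rw [← sub_add_cancel (faceBubble c h i) (X i ^ 2)]
  refine (totalDegree_add _ _).trans (max_le ?_ (isHomogeneous_X_pow i 2).totalDegree_le)
  exact (totalDegree_faceBubble_sub_X_sq_le c h i).trans one_le_two

theorem totalDegree_faceBubble_mul_le (c h : σ → R) (i j : σ) :
    (faceBubble c h i * faceBubble c h j).totalDegree ≤ 4 :=
  (totalDegree_mul _ _).trans
    (add_le_add (totalDegree_faceBubble_le c h i) (totalDegree_faceBubble_le c h j))

theorem totalDegree_faceBubble_mul_sub_le (c h : σ → R) (i j : σ) :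
    (faceBubble c h i * faceBubble c h j - X i ^ 2 * X j ^ 2).totalDegree ≤ 3 := by
  have hsplit : faceBubble c h i * faceBubble c h j - X i ^ 2 * X j ^ 2 =
      (faceBubble c h i - X i ^ 2) * faceBubble c h j +
        X i ^ 2 * (faceBubble c h j - X j ^ 2) := by ring
  rw [hsplit]
  refine (totalDegree_add _ _).trans (max_le ?_ ?_) <;> refine (totalDegree_mul _ _).trans ?_
  · exact add_le_add (totalDegree_faceBubble_sub_X_sq_le c h i) (totalDegree_faceBubble_le c h j)
  · exact add_le_add (isHomogeneous_X_pow i 2).totalDegree_le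
      (totalDegree_faceBubble_sub_X_sq_le c h j)

theorem coeff_faceBubble_mul [DecidableEq σ] (c h : σ → R) (i j : σ) {γ : σ →₀ ℕ}
    (hγ : 4 ≤ γ.degree) :
    coeff γ (faceBubble c h i * faceBubble c h j) =
      if biquadExponent i j = γ then 1 else 0 := by
  have hlower : coeff γ (faceBubble c h i * faceBubble c h j - X i ^ 2 * X j ^ 2) = 0 :=
    coeff_eq_zero_of_totalDegree_lt ((totalDegree_faceBubble_mul_sub_le c h i j).trans_lt hγ)
  rw [coeff_sub, sub_eq_zero] at hlower
  rw [hlower, X_sq_mul_X_sq_eq_monomial, coeff_monomial]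

end FaceBubble

section Remainder

variable {d : ℕ} (c h Di : Fin d → ℝ) (Dij : Fin d → Fin d → ℝ)

/-- The interpolation error `E` of the Adini element on the box with centre `c` and half-lengths
`h`, built from prescribed values `Di i` of `∂_i⁴` and `Dij i j` of `∂_i² ∂_j²`; only the entries
`Dij i j` with `i < j` matter. -/
noncomputable def adiniRemainder : MvPolynomial (Fin d) ℝ :=
  C (1 / 24 : ℝ) * ∑ i, C (Di i) * faceBubble c h i ^ 2 +
    C (1 / 4 : ℝ) * ∑ i, ∑ j,
      if i < j then C (Dij i j) * (faceBubble c h i * faceBubble c h j) else 0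

theorem adiniRemainder_mem {S : Submodule ℝ (MvPolynomial (Fin d) ℝ)}
    (hS : ∀ i j, faceBubble c h i * faceBubble c h j ∈ S) : adiniRemainder c h Di Dij ∈ S := by
  simp only [adiniRemainder, C_mul', sq]
  refine S.add_mem (S.smul_mem _ (S.sum_mem fun i _ => S.smul_mem _ (hS i i)))
    (S.smul_mem _ (S.sum_mem fun i _ => S.sum_mem fun j _ => ?_))
  split_ifs
  exacts [S.smul_mem _ (hS i j), S.zero_mem]

theorem totalDegree_adiniRemainder_le : (adiniRemainder c h Di Dij).totalDegree ≤ 4 :=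
  (mem_restrictTotalDegree _ _ _).mp <| adiniRemainder_mem c h Di Dij fun i j =>
    (mem_restrictTotalDegree _ _ _).mpr (totalDegree_faceBubble_mul_le c h i j)

theorem coeff_adiniRemainder {γ : Fin d →₀ ℕ} (hγ : 4 ≤ γ.degree) :
    coeff γ (adiniRemainder c h Di Dij) =
      1 / 24 * ∑ i, (if biquadExponent i i = γ then Di i else 0) +
        1 / 4 * ∑ i, ∑ j, if i < j then
          if biquadExponent i j = γ then Dij i j else 0 else 0 := by
  simp only [adiniRemainder, sq, coeff_add, coeff_C_mul, coeff_sum, apply_ite (coeff γ), coeff_zero,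
    coeff_faceBubble_mul c h _ _ hγ, mul_ite, mul_one, mul_zero]

theorem coeff_adiniRemainder_diag (k : Fin d) :
    coeff (biquadExponent k k) (adiniRemainder c h Di Dij) = Di k / 24 := by
  have hdiag (i : Fin d) : biquadExponent i i = biquadExponent k k ↔ i = k := by
    simp [biquadExponent_eq_iff]
  have hoff (i j : Fin d) : ¬ (i < j ∧ biquadExponent i j = biquadExponent k k) := by
    rw [biquadExponent_eq_iff]
    omega
  simp only [coeff_adiniRemainder c h Di Dij (degree_biquadExponent k k).ge, ← ite_and, hdiag, hoff,
    if_false, Finset.sum_const_zero, Finset.sum_ite_eq', Finset.mem_univ, if_true]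
  ring

theorem coeff_adiniRemainder_offDiag {k l : Fin d} (hkl : k < l) :
    coeff (biquadExponent k l) (adiniRemainder c h Di Dij) = Dij k l / 4 := by
  have hdiag (i : Fin d) : biquadExponent i i ≠ biquadExponent k l := by
    rw [Ne, biquadExponent_eq_iff]
    omega
  have hoff (i j : Fin d) : i < j ∧ biquadExponent i j = biquadExponent k l ↔ j = l ∧ i = k := by
    rw [biquadExponent_eq_iff]
    omega
  simp only [coeff_adiniRemainder c h Di Dij (degree_biquadExponent k l).ge, ← ite_and, hoff, hdiag,
    if_false, Finset.sum_const_zero]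
  simp only [ite_and, Finset.sum_ite_eq', Finset.mem_univ, if_true]
  ring

theorem pderivPow_adiniRemainder_diag (k : Fin d) :
    pderivPow (biquadExponent k k) (adiniRemainder c h Di Dij) = C (Di k) := by
  rw [pderivPow_eq_C_of_totalDegree_le, coeff_adiniRemainder_diag, ← Nat.cast_prod,
    prod_factorial_biquadExponent_self]
  · norm_num
  · exact (totalDegree_adiniRemainder_le c h Di Dij).trans_eq (degree_biquadExponent k k).symm

theorem pderivPow_adiniRemainder_offDiag {k l : Fin d} (hkl : k < l) :
    pderivPow (biquadExponent k l) (adiniRemainder c h Di Dij) = C (Dij k l) := by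
  rw [pderivPow_eq_C_of_totalDegree_le, coeff_adiniRemainder_offDiag c h Di Dij hkl,
    ← Nat.cast_prod, prod_factorial_biquadExponent_of_ne hkl.ne]
  · norm_num
  · exact (totalDegree_adiniRemainder_le c h Di Dij).trans_eq (degree_biquadExponent k l).symm

end Remainder

section Vertices

theorem derivation_apply_mem_of_mem_sq {R A : Type*} [CommSemiring R] [CommSemiring A] [Algebra R A]
    (D : Derivation R A A) {I : Ideal A} {x : A} (hx : x ∈ I ^ 2) : D x ∈ I := by
  rw [sq] at hx
  refine Submodule.mul_induction_on hx (fun y hy z hz => ?_) fun y z hy hz => ?_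
  · rw [D.leibniz]
    exact I.add_mem (I.mul_mem_right _ hy) (I.mul_mem_right _ hz)
  · rw [map_add]
    exact I.add_mem hy hz

variable {d : ℕ} {c h a : Fin d → ℝ}

theorem eval_faceBubble_of_isVertex (ha : IsVertex c h a) (i : Fin d) :
    eval a (faceBubble c h i) = 0 := by
  rcases ha i with hai | hai <;> simp [faceBubble, hai]

theorem adiniRemainder_mem_ker_eval_sq (ha : IsVertex c h a) (Di : Fin d → ℝ)
    (Dij : Fin d → Fin d → ℝ) : adiniRemainder c h Di Dij ∈ RingHom.ker (eval a) ^ 2 := by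
  refine adiniRemainder_mem (S := (RingHom.ker (eval a) ^ 2).restrictScalars ℝ) c h Di Dij
    fun i j => ?_
  rw [Submodule.restrictScalars_mem, sq]
  exact Ideal.mul_mem_mul (eval_faceBubble_of_isVertex ha i) (eval_faceBubble_of_isVertex ha j)

end Vertices

theorem adini_interpolation_remainder_general {d : ℕ} (c h : Fin d → ℝ)
    (u : MvPolynomial (Fin d) ℝ) (Di : Fin d → ℝ)
    (hDi : ∀ i, pderivPow (fun k => if k = i then 4 else 0) u = C (Di i))
    (Dij : Fin d → Fin d → ℝ)
    (hDij : ∀ i j, i < j →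
      pderivPow (fun k => if k = i then 2 else if k = j then 2 else 0) u = C (Dij i j)) :
    u - adiniRemainder c h Di Dij ∈ PA d ∧
    ∀ a : Fin d → ℝ, IsVertex c h a →
      eval a (adiniRemainder c h Di Dij) = 0 ∧
        ∀ k : Fin d, eval a (pderiv k (adiniRemainder c h Di Dij)) = 0 := by
  refine ⟨mem_PA_of_pderivPow_eq_zero fun i j hij => ?_, fun a ha => ?_⟩
  · rw [map_sub, sub_eq_zero]
    rcases hij.eq_or_lt with rfl | hlt
    · rw [pderivPow_adiniRemainder_diag, ← hDi, coe_biquadExponent_self]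
    · rw [pderivPow_adiniRemainder_offDiag c h Di Dij hlt, ← hDij i j hlt,
        coe_biquadExponent_of_ne hlt.ne]
  · have hsq := adiniRemainder_mem_ker_eval_sq ha Di Dij
    exact ⟨Ideal.pow_le_self two_ne_zero hsq,
      fun k => derivation_apply_mem_of_mem_sq (pderiv k) hsq⟩

/-- for `u` of total degree at most 4 with constant fourth derivatives
`D_i = ∂⁴u/∂x_i⁴` and `D_{ij} = ∂⁴u/∂x_i²∂x_j²`, the polynomial
`E = (1/24) Σ_i D_i ((x_i−c_i)²−h_i²)² + (1/4) Σ_{i<j} D_{ij} ((x_i−c_i)²−h_i²)((x_j−c_j)²−h_j²)`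
satisfies `u − E ∈ P_A`, and `E` and its gradient vanish at every vertex of `K`. -/
theorem adini_interpolation_remainder (d : ℕ) (hd : 1 ≤ d)
    (c h : Fin d → ℝ) (hh : ∀ i, 0 < h i)
    (u : MvPolynomial (Fin d) ℝ) (hu : u.totalDegree ≤ 4)
    (Di : Fin d → ℝ)
    (hDi : ∀ i, pderivPow (fun k => if k = i then 4 else 0) u = C (Di i))
    (Dij : Fin d → Fin d → ℝ)
    (hDij : ∀ i j, i ≠ j →
      pderivPow (fun k => if k = i then 2 else if k = j then 2 else 0) u = C (Dij i j))
    (E : MvPolynomial (Fin d) ℝ)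
    (hE : E =
      C (1 / 24 : ℝ) * ∑ i, C (Di i) * ((X i - C (c i)) ^ 2 - C (h i ^ 2)) ^ 2 +
      C (1 / 4 : ℝ) * ∑ i, ∑ j,
        if i < j then
          C (Dij i j) * (((X i - C (c i)) ^ 2 - C (h i ^ 2)) *
            ((X j - C (c j)) ^ 2 - C (h j ^ 2)))
        else 0) :
    u - E ∈ PA d ∧
    ∀ a : Fin d → ℝ, IsVertex c h a →
      eval a E = 0 ∧ ∀ k : Fin d, eval a (pderiv k E) = 0 := by
  subst hE
  exact adini_interpolation_remainder_general c h u Di hDi Dij fun i j hij => hDij i j hij.ne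
end
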